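/- There exists a solution (X, k) of the Skorokhod problem with mean minimality condition and two constraints associated with (h, Y, l, u). -/

import Mathlib

open MeasureTheory Filter Set Function Topology

noncomputable section

/-- A function with values in a topological space is càdlàg on `[0,∞)`:
right-continuous at every `t ≥ 0` and admitting a left limit at every `t > 0`. -/
def CadlagOn {E : Type*} [TopologicalSpace E] (f : ℝ → E) : Prop :=
  (∀ t : ℝ, 0 ≤ t → ContinuousWithinAt f (Set.Ici t) t) ∧
  ∀ t : ℝ, 0 < t → ∃ L : E, Filter.Tendsto f (nhdsWithin t (Set.Iio t)) (nhds L)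

/-- Condition (H) on `h : [0,∞) × ℝ → ℝ` with constants `Mh, Lh, ch, Ch`. -/
structure CondH (h : ℝ → ℝ → ℝ) (Mh Lh ch Ch : ℝ) : Prop where
  meas : Measurable (Function.uncurry h)
  Mh_pos : 0 < Mh
  Lh_pos : 0 < Lh
  ch_pos : 0 < ch
  Ch_pos : 0 < Ch
  growth : ∀ t x : ℝ, 0 ≤ t → |h t x| ≤ Mh * (1 + |x|)
  strict_mono : ∀ t : ℝ, 0 ≤ t → StrictMono (h t)
  lip_time : ∀ s t x : ℝ, 0 ≤ s → 0 ≤ t → |h t x - h s x| ≤ Lh * |t - s|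
  lip_lower : ∀ t x y : ℝ, 0 ≤ t → ch * |x - y| ≤ |h t x - h t y|
  lip_upper : ∀ t x y : ℝ, 0 ≤ t → |h t x - h t y| ≤ Ch * |x - y|

/-- A process with càdlàg paths, integrable values, and values uniformly integrable
on every compact time interval. -/
structure NiceProcess {Ω : Type*} [MeasurableSpace Ω] (μ : Measure Ω) (Y : ℝ → Ω → ℝ) : Prop where
  cadlag : ∀ ω, CadlagOn fun t => Y t ω
  integrable : ∀ t : ℝ, 0 ≤ t → Integrable (Y t) μ
  unifInt : ∀ q : ℝ, 0 ≤ q → UniformIntegrable (fun t : Set.Icc (0:ℝ) q => Y t.1) 1 μ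

/-- Solution of the Skorokhod problem with mean minimality condition and two constraints
associated with `(h, Y, l, u)`. -/
def MeanSP {Ω : Type*} [MeasurableSpace Ω] (μ : Measure Ω) (h : ℝ → ℝ → ℝ)
    (Y : ℝ → Ω → ℝ) (l u : ℝ → ℝ) (X : ℝ → Ω → ℝ) (k : ℝ → ℝ) : Prop :=
  (∀ ω, CadlagOn fun t => X t ω) ∧ CadlagOn k ∧ k 0 = 0 ∧
  (∀ t : ℝ, 0 ≤ t → ∀ ω, X t ω = Y t ω + k t) ∧
  (∀ t : ℝ, 0 ≤ t → (∫ ω, h t (X t ω) ∂μ) ∈ Set.Icc (l t) (u t)) ∧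
  (∀ t q : ℝ, 0 ≤ t → t ≤ q →
    ((∀ s : ℝ, t < s → s ≤ q → (∫ ω, h s (X s ω) ∂μ) < u s) → 0 ≤ k q - k t) ∧
    ((∀ s : ℝ, t < s → s ≤ q → l s < ∫ ω, h s (X s ω) ∂μ) → k q - k t ≤ 0)) ∧
  ∀ t : ℝ, 0 < t →
    ((∫ ω, h t (X t ω) ∂μ) < u t → 0 ≤ k t - Function.leftLim k t) ∧
    (l t < ∫ ω, h t (X t ω) ∂μ → k t - Function.leftLim k t ≤ 0)

/-- Solution of the deterministic Skorokhod problem with two time-dependent barriers. -/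
def DetSP (y lb ub x k : ℝ → ℝ) : Prop :=
  CadlagOn x ∧ CadlagOn k ∧ k 0 = 0 ∧
  (∀ t : ℝ, 0 ≤ t → x t = y t + k t ∧ x t ∈ Set.Icc (lb t) (ub t)) ∧
  (∀ t q : ℝ, 0 ≤ t → t ≤ q →
    ((∀ s : ℝ, t < s → s ≤ q → x s < ub s) → 0 ≤ k q - k t) ∧
    ((∀ s : ℝ, t < s → s ≤ q → lb s < x s) → k q - k t ≤ 0)) ∧
  ∀ t : ℝ, 0 < t →
    (x t < ub t → 0 ≤ k t - Function.leftLim k t) ∧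
    (lb t < x t → k t - Function.leftLim k t ≤ 0)

/-- Solution of the Skorokhod problem with mean minimality condition and a single
lower barrier `l`.  The minimality condition `∫ (E[h(s,X_s)] - l_s) dk_s = 0` is expressed
through any measure `ν` that agrees with the Lebesgue–Stieltjes measure of `k` on `[0,∞)`. -/
def MeanSPLower {Ω : Type*} [MeasurableSpace Ω] (μ : Measure Ω) (h : ℝ → ℝ → ℝ)
    (Y : ℝ → Ω → ℝ) (l : ℝ → ℝ) (X : ℝ → Ω → ℝ) (k : ℝ → ℝ) : Prop :=
  (∀ ω, CadlagOn fun t => X t ω) ∧ CadlagOn k ∧ k 0 = 0 ∧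
  (∀ t : ℝ, 0 ≤ t → ∀ ω, X t ω = Y t ω + k t) ∧
  (∀ t : ℝ, 0 ≤ t → l t ≤ ∫ ω, h t (X t ω) ∂μ) ∧
  MonotoneOn k (Set.Ici 0) ∧
  ∀ ν : Measure ℝ,
    (∀ a b : ℝ, 0 ≤ a → a ≤ b → ν (Set.Ioc a b) = ENNReal.ofReal (k b - k a)) →
    ν {0} = 0 →
    ∀ t : ℝ, 0 ≤ t → (∫ s in Set.Icc 0 t, ((∫ ω, h s (X s ω) ∂μ) - l s) ∂ν) = 0

/-- Solution of the Skorokhod problem with mean minimality condition and a single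
upper barrier `u`.  The minimality condition `∫ (u_s - E[h(s,X_s)]) d(-k)_s = 0` is expressed
through any measure `ν` that agrees with the Lebesgue–Stieltjes measure of `-k` on `[0,∞)`. -/
def MeanSPUpper {Ω : Type*} [MeasurableSpace Ω] (μ : Measure Ω) (h : ℝ → ℝ → ℝ)
    (Y : ℝ → Ω → ℝ) (u : ℝ → ℝ) (X : ℝ → Ω → ℝ) (k : ℝ → ℝ) : Prop :=
  (∀ ω, CadlagOn fun t => X t ω) ∧ CadlagOn k ∧ k 0 = 0 ∧
  (∀ t : ℝ, 0 ≤ t → ∀ ω, X t ω = Y t ω + k t) ∧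
  (∀ t : ℝ, 0 ≤ t → (∫ ω, h t (X t ω) ∂μ) ≤ u t) ∧
  AntitoneOn k (Set.Ici 0) ∧
  ∀ ν : Measure ℝ,
    (∀ a b : ℝ, 0 ≤ a → a ≤ b → ν (Set.Ioc a b) = ENNReal.ofReal (k a - k b)) →
    ν {0} = 0 →
    ∀ t : ℝ, 0 ≤ t → (∫ s in Set.Icc 0 t, (u s - ∫ ω, h s (X s ω) ∂μ) ∂ν) = 0

/-- `OscN x η q` is the number of `η`-oscillations of `x` on `[0,q]`: the largest `m`
for which there are `0 ≤ t₁ ≤ t₂ ≤ ⋯ ≤ t_{2m} ≤ q` with `|x(t_{2i}) - x(t_{2i-1})| > η`. -/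
def OscN (x : ℝ → ℝ) (η q : ℝ) : ℕ :=
  sSup {m : ℕ | ∃ a b : Fin m → ℝ,
    (∀ i, 0 ≤ a i ∧ a i ≤ b i ∧ b i ≤ q) ∧
    (∀ i j, i < j → b i ≤ a j) ∧
    ∀ i, η < |x (b i) - x (a i)|}

/-- The left limit at `t` of a càdlàg function on `[0,∞)`, with the convention
`x(0-) = x(0)`. -/
def leftLimAt {E : Type*} [TopologicalSpace E] (x : ℝ → E) (t : ℝ) : E :=
  if t = 0 then x 0 else Function.leftLim x t

/-- Convergence `xₙ → x` in the Skorokhod `J₁` topology on `D([0,∞), E)`, expressed via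
the sequence characterization used in the paper. -/
def DConvOn {E : Type*} [TopologicalSpace E] (xs : ℕ → ℝ → E) (x : ℝ → E) : Prop :=
  ∀ t : ℝ, 0 ≤ t → ∃ tn : ℕ → ℝ,
    (∀ n, 0 ≤ tn n) ∧ Filter.Tendsto tn Filter.atTop (nhds t) ∧
    ∀ t' t'' : ℕ → ℝ, (∀ n, 0 ≤ t' n) → (∀ n, 0 ≤ t'' n) →
      Filter.Tendsto t' Filter.atTop (nhds t) → Filter.Tendsto t'' Filter.atTop (nhds t) →
      (∀ n, t' n < tn n ∧ tn n ≤ t'' n) →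
      Filter.Tendsto (fun n => xs n (t' n)) Filter.atTop (nhds (leftLimAt x t)) ∧
      Filter.Tendsto (fun n => xs n (t'' n)) Filter.atTop (nhds (x t))

/-!
Since `x ↦ E[h(t, Y_t + x)]` is an increasing bijection, the constraint on the mean of
`h(t, Y_t + k_t)` says that `k_t` lies in `[a_t, b_t]`, where `E[h(t, Y_t + a_t)] = l_t` and
`E[h(t, Y_t + b_t)] = u_t`. Uniform integrability makes `t ↦ E[h(t, Y_t + x)]` càdlàg for each `x`,
and the lower Lipschitz bound on `h` transfers this to `a` and `b`. Thus `k` solves a deterministic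
Skorokhod problem: it is the path from `0` swept along by the moving interval `[a, b]`, given by
`k_t = sup {c | ∃ s ≤ t, c ≤ a_s and c ≤ b on [s, t]}` with `a_0` replaced by `0`.
-/

section Cadlag

/-- The filters `𝓝[≥] t` (`t ≥ 0`) and `𝓝[<] t` (`t > 0`): a function is càdlàg on `[0,∞)` if and
only if it converges along each of them, which treats both halves of `CadlagOn` at once. -/
inductive OneSidedNhds : Filter ℝ → Prop
  | right {t : ℝ} (ht : 0 ≤ t) : OneSidedNhds (𝓝[≥] t)
  | left {t : ℝ} (ht : 0 < t) : OneSidedNhds (𝓝[<] t)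

namespace OneSidedNhds

variable {F : Filter ℝ}

theorem neBot (hF : OneSidedNhds F) : F.NeBot := by
  cases hF <;> infer_instance

theorem isCountablyGenerated (hF : OneSidedNhds F) : F.IsCountablyGenerated := by
  cases hF <;> infer_instance

theorem tendstoIxxClass_Icc (hF : OneSidedNhds F) : TendstoIxxClass Icc F F := by
  cases hF <;> infer_instance

theorem exists_le_nhdsGE (hF : OneSidedNhds F) : ∃ t, 0 ≤ t ∧ F ≤ 𝓝[Ici 0] t := by
  cases hF with
  | right ht => exact ⟨_, ht, nhdsWithin_mono _ (Ici_subset_Ici.2 ht)⟩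
  | left ht =>
    exact ⟨_, ht.le, nhdsWithin_le_nhds.trans (nhdsWithin_eq_nhds.2 (Ici_mem_nhds ht)).ge⟩

theorem exists_Icc_mem (hF : OneSidedNhds F) : ∃ q, 0 ≤ q ∧ Icc 0 q ∈ F := by
  obtain ⟨t, ht, hFt⟩ := hF.exists_le_nhdsGE
  refine ⟨t + 1, by positivity, hFt ?_⟩
  filter_upwards [self_mem_nhdsWithin, nhdsWithin_le_nhds (Iic_mem_nhds (lt_add_one t))]
    with s hs0 hst using ⟨hs0, hst⟩

theorem Ici_mem (hF : OneSidedNhds F) : Ici 0 ∈ F :=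
  let ⟨_, _, hq⟩ := hF.exists_Icc_mem
  mem_of_superset hq Icc_subset_Ici_self

end OneSidedNhds

theorem cadlagOn_iff_exists_tendsto {E : Type*} [TopologicalSpace E] [T1Space E] {f : ℝ → E} :
    CadlagOn f ↔ ∀ F, OneSidedNhds F → ∃ L, Tendsto f F (𝓝 L) := by
  refine ⟨fun hf F hF => ?_, fun hf => ⟨fun t ht => ?_, fun t ht => hf _ (.left ht)⟩⟩
  · cases hF with
    | right ht => exact ⟨_, hf.1 _ ht⟩
    | left ht => exact hf.2 _ ht
  · obtain ⟨L, hL⟩ := hf _ (.right ht)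
    have hLt : f t = L :=
      pure_le_nhds_iff.1 (hL.mono_left (pure_le_nhdsWithin self_mem_Ici))
    rwa [ContinuousWithinAt, hLt]

theorem CadlagOn.exists_tendsto {E : Type*} [TopologicalSpace E] [T1Space E] {f : ℝ → E}
    (hf : CadlagOn f) {F : Filter ℝ} (hF : OneSidedNhds F) : ∃ L, Tendsto f F (𝓝 L) :=
  cadlagOn_iff_exists_tendsto.1 hf F hF

theorem cadlagOn_of_continuousOn {E : Type*} [TopologicalSpace E] [T1Space E] {f : ℝ → E}
    (hf : ContinuousOn f (Ici 0)) : CadlagOn f :=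
  cadlagOn_iff_exists_tendsto.2 fun _ hF =>
    let ⟨t, ht, hFt⟩ := hF.exists_le_nhdsGE
    ⟨f t, (hf t ht).mono_left hFt⟩

theorem cadlagOn_const {E : Type*} [TopologicalSpace E] (x : E) : CadlagOn fun _ => x :=
  ⟨fun _ _ => continuousWithinAt_const, fun _ _ => ⟨x, tendsto_const_nhds⟩⟩

theorem CadlagOn.add {E : Type*} [TopologicalSpace E] [Add E] [ContinuousAdd E] {f g : ℝ → E}
    (hf : CadlagOn f) (hg : CadlagOn g) : CadlagOn (f + g) :=
  ⟨fun t ht => (hf.1 t ht).add (hg.1 t ht), fun t ht =>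
    let ⟨L, hL⟩ := hf.2 t ht
    let ⟨M, hM⟩ := hg.2 t ht
    ⟨L + M, hL.add hM⟩⟩

theorem CadlagOn.neg {E : Type*} [TopologicalSpace E] [Neg E] [ContinuousNeg E] {f : ℝ → E}
    (hf : CadlagOn f) : CadlagOn (-f) :=
  ⟨fun t ht => (hf.1 t ht).neg, fun t ht =>
    let ⟨L, hL⟩ := hf.2 t ht
    ⟨-L, hL.neg⟩⟩

theorem CadlagOn.sub {E : Type*} [TopologicalSpace E] [AddGroup E] [IsTopologicalAddGroup E]
    {f g : ℝ → E} (hf : CadlagOn f) (hg : CadlagOn g) : CadlagOn (f - g) :=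
  sub_eq_add_neg f g ▸ hf.add hg.neg

end Cadlag

section SweptPath

/-- `k` is swept by the moving interval `[a t, b t]`, `t ≥ 0` (a sweeping process on the line):
it stays inside the interval and moves only when a barrier pushes it. That only `b` pushes `k`
down is expressed without derivatives of `k`: a level `c` that `k` has reached at time `s`, and
below which `b` does not go after `s`, is not left again. -/
structure IsSweptBy (a b k : ℝ → ℝ) : Prop where
  lower_le : ∀ ⦃t⦄, 0 ≤ t → a t ≤ k t
  le_upper : ∀ ⦃t⦄, 0 ≤ t → k t ≤ b t
  le_of_le_upper : ∀ ⦃s t c⦄, 0 ≤ s → s ≤ t → c ≤ k s → (∀ r ∈ Ioc s t, c ≤ b r) → c ≤ k t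
  le_of_lower_le : ∀ ⦃s t c⦄, 0 ≤ s → s ≤ t → k s ≤ c → (∀ r ∈ Ioc s t, a r ≤ c) → k t ≤ c

namespace IsSweptBy

variable {a b k : ℝ → ℝ}

protected theorem neg (hk : IsSweptBy a b k) : IsSweptBy (-b) (-a) (-k) where
  lower_le _ ht := neg_le_neg (hk.le_upper ht)
  le_upper _ ht := neg_le_neg (hk.lower_le ht)
  le_of_le_upper _ _ _ hs hst hc hca :=
    le_neg.1 (hk.le_of_lower_le hs hst (le_neg.1 hc) fun r hr => le_neg.1 (hca r hr))
  le_of_lower_le _ _ _ hs hst hc hcb :=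
    neg_le.1 (hk.le_of_le_upper hs hst (neg_le.1 hc) fun r hr => neg_le.1 (hcb r hr))

theorem abs_sub_le (hk : IsSweptBy a b k) {s t ε : ℝ} (hs : 0 ≤ s) (hst : s ≤ t) (hε : 0 ≤ ε)
    (ha : ∀ r ∈ Ioc s t, |a r - a s| ≤ ε) (hb : ∀ r ∈ Ioc s t, |b r - b s| ≤ ε) :
    |k t - k s| ≤ ε := by
  have hlow : k s - ε ≤ k t := hk.le_of_le_upper hs hst (by linarith) fun r hr => by
    linarith [hk.le_upper hs, neg_le_of_abs_le (hb r hr)]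
  have hupp : k t ≤ k s + ε := hk.le_of_lower_le hs hst (by linarith) fun r hr => by
    linarith [hk.lower_le hs, le_of_abs_le (ha r hr)]
  exact abs_sub_le_iff.2 ⟨by linarith, by linarith⟩

theorem cauchy_map (hk : IsSweptBy a b k) {F : Filter ℝ} [F.NeBot] [TendstoIxxClass Icc F F]
    (hF : Ici 0 ∈ F) (ha : Cauchy (map a F)) (hb : Cauchy (map b F)) : Cauchy (map k F) := by
  simp only [cauchy_map_iff', Metric.uniformity_basis_dist.tendsto_right_iff,
    Set.mem_ofPred_eq] at ha hb ⊢
  intro ε hε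
  obtain ⟨U, hU, hUab⟩ : ∃ U ∈ F, ∀ s ∈ U, ∀ t ∈ U,
      dist (a s) (a t) < ε / 2 ∧ dist (b s) (b t) < ε / 2 :=
    eventually_prod_self_iff.1 ((ha (ε / 2) (half_pos hε)).and (hb (ε / 2) (half_pos hε)))
  have hclose : ∀ s t, s ≤ t → Icc s t ⊆ U ∩ Ici 0 → dist (k t) (k s) < ε := by
    intro s t hst hsub
    have hs := hsub (left_mem_Icc.2 hst)
    refine lt_of_le_of_lt (hk.abs_sub_le hs.2 hst (half_pos hε).le (fun r hr => ?_) fun r hr => ?_)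
      (half_lt_self hε)
    · exact (hUab r (hsub ⟨hr.1.le, hr.2⟩).1 s hs.1).1.le
    · exact (hUab r (hsub ⟨hr.1.le, hr.2⟩).1 s hs.1).2.le
  have hUF : U ∩ Ici 0 ∈ F := inter_mem hU hF
  filter_upwards [tendsto_smallSets_iff.1 (tendsto_fst.Icc tendsto_snd) _ hUF,
    tendsto_smallSets_iff.1 (tendsto_snd.Icc tendsto_fst) _ hUF] with p hp hp'
  rcases le_total p.1 p.2 with hle | hle
  · exact dist_comm (k p.1) (k p.2) ▸ hclose _ _ hle hp
  · exact hclose _ _ hle hp'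

theorem cadlagOn (hk : IsSweptBy a b k) (ha : CadlagOn a) (hb : CadlagOn b) : CadlagOn k :=
  cadlagOn_iff_exists_tendsto.2 fun _ hF =>
    have := hF.neBot
    have := hF.tendstoIxxClass_Icc
    cauchy_map_iff_exists_tendsto.1 <| hk.cauchy_map hF.Ici_mem
      (cauchy_map_iff_exists_tendsto.2 (ha.exists_tendsto hF))
      (cauchy_map_iff_exists_tendsto.2 (hb.exists_tendsto hF))

theorem le_of_frequently_le_left (hk : IsSweptBy a b k) (hb : CadlagOn b) {t c : ℝ} (ht : 0 < t)
    (hlt : k t < b t) (hfreq : ∃ᶠ s in 𝓝[<] t, c ≤ k s) : c ≤ k t := by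
  by_contra! hkc
  obtain ⟨B, hB⟩ := hb.2 t ht
  have hpos : ∀ᶠ s in 𝓝[<] t, 0 < s := nhdsWithin_le_nhds (lt_mem_nhds ht)
  have hcB : c ≤ B := by
    refine ge_of_tendsto_of_frequently hB ((hfreq.and_eventually hpos).mono fun s hs => ?_)
    exact hs.1.trans (hk.le_upper hs.2.le)
  obtain ⟨d, hkd, hd⟩ := exists_between (lt_min hkc hlt)
  obtain ⟨hdc, hdb⟩ := lt_min_iff.1 hd
  obtain ⟨v, hvt, hv⟩ := mem_nhdsLT_iff_exists_Ioo_subset.1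
    ((hB.eventually_const_lt (hdc.trans_le hcB)).and hpos)
  obtain ⟨s, hcs, hs⟩ := (hfreq.and_eventually (Ioo_mem_nhdsLT hvt)).exists
  have hdb' : ∀ r ∈ Ioc s t, d ≤ b r := fun r hr => by
    rcases hr.2.lt_or_eq with hrt | rfl
    · exact (hv ⟨hs.1.trans hr.1, hrt⟩).1.le
    · exact hdb.le
  exact hkd.not_ge (hk.le_of_le_upper (hv hs).2.le hs.2.le (hdc.le.trans hcs) hdb')

theorem le_of_tendsto_left (hk : IsSweptBy a b k) (hb : CadlagOn b) {t K : ℝ} (ht : 0 < t)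
    (hlt : k t < b t) (hK : Tendsto k (𝓝[<] t) (𝓝 K)) : K ≤ k t :=
  le_of_forall_lt_imp_le_of_dense fun _ hc => hk.le_of_frequently_le_left hb ht hlt
    ((hK.eventually_const_lt hc).mono fun _ => le_of_lt).frequently

-- If `k q < c < k t`, then `k` could not fall below `c` after the last time at which it is at
-- least `c`, because `b` exceeds `c` at that time.
theorem le_of_forall_lt_upper (hk : IsSweptBy a b k) (hb : CadlagOn b) {t q : ℝ} (ht : 0 ≤ t)
    (htq : t ≤ q) (hlt : ∀ s ∈ Ioc t q, k s < b s) : k t ≤ k q := by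
  by_contra! hqt
  obtain ⟨c, hqc, hct⟩ := exists_between hqt
  set S : Set ℝ := {s ∈ Icc t q | c ≤ k s}
  have htS : t ∈ S := ⟨left_mem_Icc.2 htq, hct.le⟩
  obtain ⟨σ, hσ⟩ : ∃ σ, IsLUB S σ := ⟨_, isLUB_csSup ⟨t, htS⟩ ⟨q, fun s hs => hs.1.2⟩⟩
  have htσ : t ≤ σ := hσ.1 htS
  have hσq : σ ≤ q := hσ.2 fun s hs => hs.1.2
  have hcσ : c ≤ k σ := by
    by_contra! hσc
    have htσ' : t < σ := htσ.lt_of_ne fun h => hσc.not_ge (h ▸ hct.le)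
    refine hσc.not_ge <|
      hk.le_of_frequently_le_left hb (ht.trans_lt htσ') (hlt σ ⟨htσ', hσq⟩) fun hleft => ?_
    refine hσ.frequently_mem ⟨t, htS⟩ ?_
    rw [← Iio_insert, nhdsWithin_insert, eventually_sup]
    exact ⟨fun hσS => hσc.not_ge hσS.2, hleft.mono fun s hs hsS => hs hsS.2⟩
  have hσq' : σ < q := hσq.lt_of_ne fun h => hqc.not_ge (h ▸ hcσ)
  have hcb : c < b σ := by
    rcases htσ.eq_or_lt with rfl | htσ'
    · exact hct.trans_le (hk.le_upper ht)
    · exact hcσ.trans_lt (hlt σ ⟨htσ', hσq⟩)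
  obtain ⟨v, hσv, hv⟩ := mem_nhdsGE_iff_exists_Ico_subset.1
    ((hb.1 σ (ht.trans htσ)).eventually_const_lt hcb)
  obtain ⟨s, hσs, hs⟩ := exists_between (lt_min (show σ < v from hσv) hσq')
  obtain ⟨hsv, hsq⟩ := lt_min_iff.1 hs
  have hcs : c ≤ k s := hk.le_of_le_upper (ht.trans htσ) hσs.le hcσ fun r hr =>
    (show c < b r from hv ⟨hr.1.le, hr.2.trans_lt hsv⟩).le
  exact (hσ.1 ⟨⟨htσ.trans hσs.le, hsq.le⟩, hcs⟩).not_gt hσs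

theorem detSP {y lb ub : ℝ → ℝ} (hk : IsSweptBy (lb - y) (ub - y) k) (hk0 : k 0 = 0)
    (hy : CadlagOn y) (hlb : CadlagOn lb) (hub : CadlagOn ub) : DetSP y lb ub (y + k) k := by
  have ha := hlb.sub hy
  have hb := hub.sub hy
  have hkc := hk.cadlagOn ha hb
  have below_upper {s : ℝ} (hlt : (y + k) s < ub s) : k s < (ub - y) s :=
    lt_sub_iff_add_lt'.2 hlt
  have above_lower {s : ℝ} (hlt : lb s < (y + k) s) : (-k) s < (-(lb - y)) s :=
    neg_lt_neg (sub_lt_iff_lt_add'.2 hlt)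
  refine ⟨hy.add hkc, hkc, hk0, fun t ht => ⟨rfl, ?_, ?_⟩, fun t q ht htq => ⟨fun h => ?_,
    fun h => ?_⟩, fun t ht => ⟨fun h => ?_, fun h => ?_⟩⟩
  · exact sub_le_iff_le_add'.1 (hk.lower_le ht)
  · exact le_sub_iff_add_le'.1 (hk.le_upper ht)
  · exact sub_nonneg.2 <|
      hk.le_of_forall_lt_upper hb ht htq fun s hs => below_upper (h s hs.1 hs.2)
  · exact sub_nonpos.2 <| neg_le_neg_iff.1 <|
      hk.neg.le_of_forall_lt_upper ha.neg ht htq fun s hs => above_lower (h s hs.1 hs.2)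
  · obtain ⟨K, hK⟩ := hkc.2 t ht
    rw [leftLim_eq_of_tendsto hK]
    exact sub_nonneg.2 (hk.le_of_tendsto_left hb ht (below_upper h) hK)
  · obtain ⟨K, hK⟩ := hkc.2 t ht
    rw [leftLim_eq_of_tendsto hK]
    exact sub_nonpos.2 <| neg_le_neg_iff.1 <|
      hk.neg.le_of_tendsto_left ha.neg ht (above_lower h) hK.neg

end IsSweptBy

/-- The levels at or below which the upper barrier `b` has not gone since some time `s ≤ t` at
which the lower barrier `a` was at or above them; their supremum is the path swept by `[a, b]`
from `a 0`. -/
def sweptLevels (a b : ℝ → ℝ) (t : ℝ) : Set ℝ :=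
  {c | ∃ s ∈ Icc 0 t, c ≤ a s ∧ ∀ r ∈ Icc s t, c ≤ b r}

variable {a b : ℝ → ℝ}

theorem self_mem_sweptLevels {t : ℝ} (ht : 0 ≤ t) (hab : a t ≤ b t) : a t ∈ sweptLevels a b t :=
  ⟨t, right_mem_Icc.2 ht, le_rfl, fun r hr => by rwa [← le_antisymm hr.1 hr.2]⟩

theorem upper_mem_upperBounds_sweptLevels (a b : ℝ → ℝ) (t : ℝ) :
    b t ∈ upperBounds (sweptLevels a b t) :=
  fun _ ⟨_, hs, _, hcb⟩ => hcb t (right_mem_Icc.2 hs.2)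

theorem sSup_sweptLevels_zero (hab : a 0 ≤ b 0) : sSup (sweptLevels a b 0) = a 0 := by
  refine IsGreatest.csSup_eq ⟨self_mem_sweptLevels le_rfl hab, fun c ⟨s, hs, hcs, _⟩ => ?_⟩
  obtain rfl := le_antisymm hs.2 hs.1
  exact hcs

theorem isSweptBy_sSup_sweptLevels (hab : ∀ t, 0 ≤ t → a t ≤ b t) :
    IsSweptBy a b fun t => sSup (sweptLevels a b t) := by
  have hne {t} (ht : 0 ≤ t) : (sweptLevels a b t).Nonempty :=
    ⟨_, self_mem_sweptLevels ht (hab t ht)⟩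
  have hbdd (t) : BddAbove (sweptLevels a b t) := ⟨_, upper_mem_upperBounds_sweptLevels a b t⟩
  refine ⟨fun t ht => le_csSup (hbdd t) (self_mem_sweptLevels ht (hab t ht)),
    fun t ht => csSup_le (hne ht) (upper_mem_upperBounds_sweptLevels a b t),
    fun s t c hs hst hc hcb => le_of_forall_lt_imp_le_of_dense fun d hdc => ?_,
    fun s t c hs hst hc hca => csSup_le (hne (hs.trans hst)) ?_⟩
  · obtain ⟨e, ⟨p, hp, hep, heb⟩, hde⟩ := exists_lt_of_lt_csSup (hne hs) (hdc.trans_le hc)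
    refine le_csSup (hbdd t) ⟨p, ⟨hp.1, hp.2.trans hst⟩, hde.le.trans hep, fun r hr => ?_⟩
    rcases le_or_gt r s with hrs | hsr
    · exact hde.le.trans (heb r ⟨hr.1, hrs⟩)
    · exact hdc.le.trans (hcb r ⟨hsr, hr.2⟩)
  · rintro d ⟨p, hp, hdp, hdb⟩
    rcases le_or_gt p s with hps | hsp
    · refine le_trans (le_csSup (hbdd s) ?_) hc
      exact ⟨p, ⟨hp.1, hps⟩, hdp, fun r hr => hdb r ⟨hr.1, hr.2.trans hst⟩⟩
    · exact hdp.trans (hca p ⟨hsp, hp.2⟩)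

theorem exists_isSweptBy (hab : ∀ t, 0 ≤ t → a t ≤ b t) {x : ℝ} (hx : x ∈ Icc (a 0) (b 0)) :
    ∃ k, k 0 = x ∧ IsSweptBy a b k := by
  have hle : a ≤ update a 0 x := le_update_iff.2 ⟨hx.1, fun _ _ => le_rfl⟩
  have hupd : ∀ t, 0 ≤ t → update a 0 x t ≤ b t := fun t ht => by
    rcases eq_or_ne t 0 with rfl | h
    · simpa only [update_self] using hx.2
    · simpa only [update_of_ne h] using hab t ht
  have hk := isSweptBy_sSup_sweptLevels hupd
  refine ⟨_, by rw [sSup_sweptLevels_zero (hupd 0 le_rfl), update_self],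
    fun t ht => (hle t).trans (hk.lower_le ht), hk.le_upper, hk.le_of_le_upper,
    fun s t c hs hst hc hca => hk.le_of_lower_le hs hst hc fun r hr => ?_⟩
  rw [update_of_ne (hs.trans_lt hr.1).ne']
  exact hca r hr

theorem exists_detSP {y lb ub : ℝ → ℝ} (hy : CadlagOn y) (hlb : CadlagOn lb) (hub : CadlagOn ub)
    (hle : ∀ t, 0 ≤ t → lb t ≤ ub t) (hy0 : y 0 ∈ Icc (lb 0) (ub 0)) :
    ∃ x k, DetSP y lb ub x k := by
  obtain ⟨k, hk0, hk⟩ := exists_isSweptBy (a := lb - y) (b := ub - y)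
    (fun t ht => sub_le_sub_right (hle t ht) _) ⟨sub_nonpos.2 hy0.1, sub_nonneg.2 hy0.2⟩
  exact ⟨y + k, k, hk.detSP hk0 hy hlb hub⟩

end SweptPath

section StronglyMonotone

/-- `f` is strongly monotone with modulus `c`: its increments are at least `c` times those of its
argument. -/
def StronglyMonotone (c : ℝ) (f : ℝ → ℝ) : Prop :=
  ∀ ⦃x y⦄, x ≤ y → c * (y - x) ≤ f y - f x

namespace StronglyMonotone

variable {c : ℝ} {f : ℝ → ℝ}

protected theorem strictMono (hf : StronglyMonotone c f) (hc : 0 < c) : StrictMono f :=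
  fun _ _ hxy => sub_pos.1 ((mul_pos hc (sub_pos.2 hxy)).trans_le (hf hxy.le))

theorem mul_abs_sub_le (hf : StronglyMonotone c f) (x y : ℝ) : c * |x - y| ≤ |f x - f y| := by
  wlog hxy : y ≤ x generalizing x y
  · simpa only [abs_sub_comm] using this y x (le_of_not_ge hxy)
  · rw [abs_of_nonneg (sub_nonneg.2 hxy)]
    exact (hf hxy).trans (le_abs_self _)

theorem surjective (hf : StronglyMonotone c f) (hc : 0 < c) (hcont : Continuous f) :
    Surjective f := fun v => by
  set r := |v - f 0| / c
  have hr : 0 ≤ r := by positivity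
  have hcr : c * r = |v - f 0| := mul_div_cancel₀ _ hc.ne'
  refine mem_range_of_exists_le_of_exists_ge hcont ⟨-r, ?_⟩ ⟨r, ?_⟩
  · linarith [hf (neg_nonpos.2 hr), neg_abs_le (v - f 0)]
  · linarith [hf hr, le_abs_self (v - f 0)]

variable {ι : Type*} {F : Filter ι} {φ : ι → ℝ → ℝ}

theorem of_tendsto [F.NeBot] (hφ : ∀ᶠ i in F, StronglyMonotone c (φ i))
    (hf : ∀ x, Tendsto (φ · x) F (𝓝 (f x))) : StronglyMonotone c f := fun x y hxy =>
  ge_of_tendsto ((hf y).sub (hf x)) (hφ.mono fun _ h => h hxy)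

theorem tendsto_of_tendsto_apply (hc : 0 < c) (hφ : ∀ᶠ i in F, StronglyMonotone c (φ i))
    {a : ι → ℝ} {x L : ℝ} (ha : Tendsto (fun i => φ i (a i)) F (𝓝 L))
    (hx : Tendsto (φ · x) F (𝓝 L)) : Tendsto a F (𝓝 x) := by
  have hlim : Tendsto (fun i => |φ i (a i) - φ i x| / c) F (𝓝 0) := by
    simpa only [sub_self, abs_zero, zero_div] using (ha.sub hx).abs.div_const c
  refine tendsto_iff_dist_tendsto_zero.2 (squeeze_zero' (.of_forall fun _ => dist_nonneg) ?_ hlim)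
  filter_upwards [hφ] with i hi
  exact (le_div_iff₀' hc).2 (hi.mul_abs_sub_le (a i) x)

end StronglyMonotone

-- The limit of the functions `H s` along a one-sided neighbourhood filter has a root for the limit
-- of `l`, to which strong monotonicity forces the roots of the `H s` to converge.
theorem exists_cadlagOn_apply_eq {c : ℝ} (hc : 0 < c) {K : NNReal} {H : ℝ → ℝ → ℝ} {l : ℝ → ℝ}
    (hmono : ∀ t, 0 ≤ t → StronglyMonotone c (H t)) (hlip : ∀ t, 0 ≤ t → LipschitzWith K (H t))
    (hH : ∀ x, CadlagOn (H · x)) (hl : CadlagOn l) :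
    ∃ a, CadlagOn a ∧ ∀ t, 0 ≤ t → H t (a t) = l t := by
  have hroot : ∀ t, ∃ x, 0 ≤ t → H t x = l t := fun t => by
    by_cases ht : 0 ≤ t
    · obtain ⟨x, hx⟩ := (hmono t ht).surjective hc (hlip t ht).continuous (l t)
      exact ⟨x, fun _ => hx⟩
    · exact ⟨0, fun h => absurd h ht⟩
  choose a ha using hroot
  refine ⟨a, cadlagOn_iff_exists_tendsto.2 fun F hF => ?_, ha⟩
  have := hF.neBot
  choose G hG using fun x => (hH x).exists_tendsto hF
  obtain ⟨L, hL⟩ := hl.exists_tendsto hF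
  have hmonoF : ∀ᶠ t in F, StronglyMonotone c (H t) := mem_of_superset hF.Ici_mem hmono
  have hGlip : LipschitzWith K G := isClosed_setOfPred_lipschitzWith K |>.mem_of_tendsto
    (tendsto_pi_nhds.2 hG) (mem_of_superset hF.Ici_mem hlip)
  obtain ⟨x, hx⟩ := (StronglyMonotone.of_tendsto hmonoF hG).surjective hc hGlip.continuous L
  have haL : Tendsto (fun t => H t (a t)) F (𝓝 L) :=
    hL.congr' (mem_of_superset hF.Ici_mem fun t ht => (ha t ht).symm)
  exact ⟨x, StronglyMonotone.tendsto_of_tendsto_apply hc hmonoF haL (hx ▸ hG x)⟩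

end StronglyMonotone

section LipschitzIntegral

variable {Ω E G : Type*} [MeasurableSpace Ω] {μ : Measure Ω} [NormedAddCommGroup E]
  [NormedAddCommGroup G] {K : NNReal}

theorem integrable_comp_of_lipschitzWith [IsFiniteMeasure μ] {φ : E → G}
    (hφ : LipschitzWith K φ) {Z : Ω → E} (hZ : Integrable Z μ) :
    Integrable (fun ω => φ (Z ω)) μ := by
  refine ((hZ.norm.const_mul K).add (integrable_const ‖φ 0‖)).mono'
    (hφ.continuous.comp_aestronglyMeasurable hZ.1) (.of_forall fun ω => ?_)
  simpa using (norm_le_norm_sub_add (φ (Z ω)) (φ 0)).trans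
    (add_le_add_left (hφ.norm_sub_le (Z ω) 0) _)

variable [NormedSpace ℝ G]

theorem edist_integral_comp_le_of_lipschitzWith [IsFiniteMeasure μ] {φ : E → G}
    (hφ : LipschitzWith K φ) {W Z : Ω → E} (hW : Integrable W μ) (hZ : Integrable Z μ) :
    edist (∫ ω, φ (W ω) ∂μ) (∫ ω, φ (Z ω) ∂μ) ≤ K * eLpNorm (W - Z) 1 μ := by
  rw [edist_eq_enorm_sub, ← integral_sub (integrable_comp_of_lipschitzWith hφ hW)
    (integrable_comp_of_lipschitzWith hφ hZ), eLpNorm_one_eq_lintegral_enorm,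
    ← lintegral_const_mul' _ _ ENNReal.coe_ne_top]
  refine (enorm_integral_le_lintegral_enorm _).trans (lintegral_mono fun ω => ?_)
  simpa only [edist_eq_enorm_sub, Pi.sub_apply] using hφ (W ω) (Z ω)

variable {ι : Type*} {u : Filter ι} [u.IsCountablyGenerated] {φ : ι → E → G} {ψ : E → G}
  {Z : Ω → E}

theorem tendsto_integral_comp_of_lipschitzWith [IsFiniteMeasure μ]
    (hφ : ∀ᶠ i in u, LipschitzWith K (φ i)) (hψ : ∀ x, Tendsto (φ · x) u (𝓝 (ψ x)))
    (hZ : Integrable Z μ) :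
    Tendsto (fun i => ∫ ω, φ i (Z ω) ∂μ) u (𝓝 (∫ ω, ψ (Z ω) ∂μ)) := by
  refine tendsto_integral_filter_of_dominated_convergence (fun ω => K * ‖Z ω‖ + (‖ψ 0‖ + 1))
    (hφ.mono fun i hi => hi.continuous.comp_aestronglyMeasurable hZ.1) ?_
    ((hZ.norm.const_mul K).add (integrable_const _)) (.of_forall fun ω => hψ (Z ω))
  filter_upwards [hφ, (hψ 0).norm.eventually_le_const (lt_add_one _)] with i hi hi0
  refine .of_forall fun ω => ?_
  have hnorm := hi.norm_sub_le (Z ω) 0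
  rw [sub_zero] at hnorm
  exact (norm_le_norm_sub_add _ (φ i 0)).trans (add_le_add hnorm hi0)

theorem tendsto_integral_comp_of_tendsto_eLpNorm [IsFiniteMeasure μ]
    (hφ : ∀ᶠ i in u, LipschitzWith K (φ i)) (hψ : ∀ x, Tendsto (φ · x) u (𝓝 (ψ x)))
    {W : ι → Ω → E} (hW : ∀ᶠ i in u, Integrable (W i) μ) (hZ : Integrable Z μ)
    (hWZ : Tendsto (fun i => eLpNorm (W i - Z) 1 μ) u (𝓝 0)) :
    Tendsto (fun i => ∫ ω, φ i (W i ω) ∂μ) u (𝓝 (∫ ω, ψ (Z ω) ∂μ)) := by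
  have hZlim := tendsto_iff_edist_tendsto_0.1 (tendsto_integral_comp_of_lipschitzWith hφ hψ hZ)
  have hlim := (ENNReal.Tendsto.const_mul (a := K) hWZ (.inr ENNReal.coe_ne_top)).add hZlim
  rw [mul_zero, add_zero] at hlim
  refine tendsto_iff_edist_tendsto_0.2 <|
    tendsto_of_tendsto_of_tendsto_of_le_of_le' tendsto_const_nhds hlim
      (.of_forall fun _ => zero_le) ?_
  filter_upwards [hφ, hW] with i hφi hWi
  exact (edist_triangle _ _ _).trans
    (add_le_add_left (edist_integral_comp_le_of_lipschitzWith hφi hWi hZ) _)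

theorem tendsto_eLpNorm_sub_of_uniformIntegrable [IsFiniteMeasure μ] {p : ENNReal} (hp : 1 ≤ p)
    (hp' : p ≠ ⊤) {f : ι → Ω → E} {g : Ω → E} (hf : UniformIntegrable f p μ) (hg : MemLp g p μ)
    (hfg : ∀ᵐ ω ∂μ, Tendsto (f · ω) u (𝓝 (g ω))) :
    Tendsto (fun i => eLpNorm (f i - g) p μ) u (𝓝 0) :=
  tendsto_of_seq_tendsto fun x hx =>
    have hunif : UnifIntegrable (fun n => f (x n)) p μ := fun _ hε =>
      let ⟨δ, hδ, hle⟩ := hf.2.1 hε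
      ⟨δ, hδ, fun n => hle (x n)⟩
    tendsto_Lp_finite_of_tendsto_ae hp hp' (fun n => hf.1 (x n)) hg hunif
      (hfg.mono fun _ h => h.comp hx)

end LipschitzIntegral

section ShiftedMean

variable {Ω : Type*} [MeasurableSpace Ω] {μ : Measure Ω} {h : ℝ → ℝ → ℝ} {Y : ℝ → Ω → ℝ}
  {K : NNReal}

theorem NiceProcess.exists_tendsto_eLpNorm_sub [IsFiniteMeasure μ] (hY : NiceProcess μ Y)
    {F : Filter ℝ} (hF : OneSidedNhds F) :
    ∃ Z, Integrable Z μ ∧ Tendsto (fun t => eLpNorm (Y t - Z) 1 μ) F (𝓝 0) := by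
  have := hF.neBot
  have := hF.isCountablyGenerated
  obtain ⟨q, hq, hqF⟩ := hF.exists_Icc_mem
  have : (comap ((↑) : Icc 0 q → ℝ) F).NeBot :=
    comap_coe_neBot_of_le_principal (le_principal_iff.2 hqF)
  choose Z hZ using fun ω => (hY.cadlag ω).exists_tendsto hF
  have hZ' : ∀ᵐ ω ∂μ, Tendsto (fun t : Icc 0 q => Y t ω) (comap (↑) F) (𝓝 (Z ω)) :=
    .of_forall fun ω => (hZ ω).comp tendsto_comap
  have hZint : MemLp Z 1 μ := (hY.unifInt q hq).memLp_of_ae_tendsto hZ'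
  refine ⟨Z, memLp_one_iff_integrable.1 hZint, ?_⟩
  have hlim := tendsto_eLpNorm_sub_of_uniformIntegrable le_rfl ENNReal.one_ne_top
    (hY.unifInt q hq) hZint hZ'
  exact (tendsto_comap'_iff (Subtype.range_coe.symm ▸ hqF)).1 hlim

theorem NiceProcess.cadlagOn_integral_comp [IsFiniteMeasure μ] (hY : NiceProcess μ Y)
    (hlip : ∀ t, 0 ≤ t → LipschitzWith K (h t)) (hh : ∀ x, CadlagOn (h · x)) :
    CadlagOn fun t => ∫ ω, h t (Y t ω) ∂μ := by
  refine cadlagOn_iff_exists_tendsto.2 fun F hF => ?_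
  have := hF.isCountablyGenerated
  choose φ hφ using fun x => (hh x).exists_tendsto hF
  obtain ⟨Z, hZ, hYZ⟩ := hY.exists_tendsto_eLpNorm_sub hF
  exact ⟨_, tendsto_integral_comp_of_tendsto_eLpNorm (mem_of_superset hF.Ici_mem hlip) hφ
    (mem_of_superset hF.Ici_mem hY.integrable) hZ hYZ⟩

/-- The mean of `h t` after a deterministic shift of the process, written `H(t, x, Y_t)` in the
literature. The constraints on `X = Y + k` say that `k t` lies between the points at which
`shiftedMean μ h Y t` equals `l t` and `u t`. -/
def shiftedMean (μ : Measure Ω) (h : ℝ → ℝ → ℝ) (Y : ℝ → Ω → ℝ) (t x : ℝ) : ℝ :=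
  ∫ ω, h t (Y t ω + x) ∂μ

theorem cadlagOn_shiftedMean [IsFiniteMeasure μ] (hY : NiceProcess μ Y)
    (hlip : ∀ t, 0 ≤ t → LipschitzWith K (h t)) (hh : ∀ x, CadlagOn (h · x)) (x : ℝ) :
    CadlagOn (shiftedMean μ h Y · x) :=
  hY.cadlagOn_integral_comp (h := fun t y => h t (y + x))
    (fun t ht => mul_one K ▸ (hlip t ht).comp (isometry_add_right x).lipschitz)
    fun y => hh (y + x)

variable [IsProbabilityMeasure μ] {t : ℝ}

theorem lipschitzWith_shiftedMean (hlip : LipschitzWith K (h t)) (hY : Integrable (Y t) μ) :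
    LipschitzWith K (shiftedMean μ h Y t) := fun x y => by
  refine (edist_integral_comp_le_of_lipschitzWith hlip (hY.add (integrable_const x))
    (hY.add (integrable_const y))).trans_eq ?_
  rw [add_sub_add_left_eq_sub, eLpNorm_one_eq_lintegral_enorm]
  simp [edist_eq_enorm_sub]

theorem stronglyMonotone_shiftedMean {c : ℝ} (hmono : StronglyMonotone c (h t))
    (hlip : LipschitzWith K (h t)) (hY : Integrable (Y t) μ) :
    StronglyMonotone c (shiftedMean μ h Y t) := fun x y hxy => by
  have hint (z : ℝ) : Integrable (fun ω => h t (Y t ω + z)) μ :=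
    integrable_comp_of_lipschitzWith hlip (hY.add (integrable_const z))
  calc c * (y - x) = ∫ _, c * (y - x) ∂μ := by rw [integral_const, probReal_univ, one_smul]
    _ ≤ ∫ ω, (h t (Y t ω + y) - h t (Y t ω + x)) ∂μ :=
      integral_mono (integrable_const _) ((hint y).sub (hint x)) fun ω => by
        simpa only [add_sub_add_left_eq_sub] using hmono (add_le_add_right hxy (Y t ω))
    _ = shiftedMean μ h Y t y - shiftedMean μ h Y t x := integral_sub (hint y) (hint x)

end ShiftedMean

theorem DetSP.meanSP {Ω : Type*} [MeasurableSpace Ω] {μ : Measure Ω} {h : ℝ → ℝ → ℝ}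
    {Y : ℝ → Ω → ℝ} {l u a b x k : ℝ → ℝ} (hk : DetSP 0 a b x k)
    (hY : ∀ ω, CadlagOn fun t => Y t ω)
    (hmono : ∀ t, 0 ≤ t → StrictMono (shiftedMean μ h Y t))
    (ha : ∀ t, 0 ≤ t → shiftedMean μ h Y t (a t) = l t)
    (hb : ∀ t, 0 ≤ t → shiftedMean μ h Y t (b t) = u t) :
    MeanSP μ h Y l u (fun t ω => Y t ω + k t) k := by
  obtain ⟨-, hkc, hk0, hx, hpush, hjump⟩ := hk
  have hxk {t : ℝ} (ht : 0 ≤ t) : x t = k t := by simpa using (hx t ht).1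
  have above_lower {t : ℝ} (ht : 0 ≤ t) (hlt : l t < shiftedMean μ h Y t (k t)) : a t < x t := by
    rwa [← ha t ht, (hmono t ht).lt_iff_lt, ← hxk ht] at hlt
  have below_upper {t : ℝ} (ht : 0 ≤ t) (hlt : shiftedMean μ h Y t (k t) < u t) : x t < b t := by
    rwa [← hb t ht, (hmono t ht).lt_iff_lt, ← hxk ht] at hlt
  refine ⟨fun ω => (hY ω).add hkc, hkc, hk0, fun _ _ _ => rfl, fun t ht => ?_,
    fun t q ht htq => ⟨fun hlt => (hpush t q ht htq).1 fun s hs hsq => ?_,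
      fun hlt => (hpush t q ht htq).2 fun s hs hsq => ?_⟩,
    fun t ht => ⟨fun hlt => (hjump t ht).1 (below_upper ht.le hlt),
      fun hlt => (hjump t ht).2 (above_lower ht.le hlt)⟩⟩
  · rw [← ha t ht, ← hb t ht]
    have hxt := (hx t ht).2
    rw [hxk ht] at hxt
    exact ⟨(hmono t ht).monotone hxt.1, (hmono t ht).monotone hxt.2⟩
  · exact below_upper (ht.trans hs.le) (hlt s hs hsq)
  · exact above_lower (ht.trans hs.le) (hlt s hs hsq)

theorem stmt_4_general {Ω : Type*} [MeasurableSpace Ω] {μ : Measure Ω} [IsProbabilityMeasure μ]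
    {c : ℝ} (hc : 0 < c) {K : NNReal} {h : ℝ → ℝ → ℝ}
    (hmono : ∀ t, 0 ≤ t → StronglyMonotone c (h t))
    (hlip : ∀ t, 0 ≤ t → LipschitzWith K (h t)) (hh : ∀ x, CadlagOn (h · x))
    {Y : ℝ → Ω → ℝ} (hY : NiceProcess μ Y) {l u : ℝ → ℝ} (hl : CadlagOn l) (hu : CadlagOn u)
    (hlu : ∀ t, 0 ≤ t → l t ≤ u t) (h0 : (∫ ω, h 0 (Y 0 ω) ∂μ) ∈ Icc (l 0) (u 0)) :
    ∃ (X : ℝ → Ω → ℝ) (k : ℝ → ℝ), MeanSP μ h Y l u X k := by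
  have hmonoH (t) (ht : 0 ≤ t) : StronglyMonotone c (shiftedMean μ h Y t) :=
    stronglyMonotone_shiftedMean (hmono t ht) (hlip t ht) (hY.integrable t ht)
  have hlipH (t) (ht : 0 ≤ t) : LipschitzWith K (shiftedMean μ h Y t) :=
    lipschitzWith_shiftedMean (hlip t ht) (hY.integrable t ht)
  have hH := cadlagOn_shiftedMean hY hlip hh
  have hstrict (t) (ht : 0 ≤ t) := (hmonoH t ht).strictMono hc
  obtain ⟨a, hac, ha⟩ := exists_cadlagOn_apply_eq hc hmonoH hlipH hH hl
  obtain ⟨b, hbc, hb⟩ := exists_cadlagOn_apply_eq hc hmonoH hlipH hH hu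
  have hab (t) (ht : 0 ≤ t) : a t ≤ b t := by
    rw [← (hstrict t ht).le_iff_le, ha t ht, hb t ht]
    exact hlu t ht
  have hab0 : (0 : ℝ) ∈ Icc (a 0) (b 0) := by
    have hH0 : shiftedMean μ h Y 0 0 = ∫ ω, h 0 (Y 0 ω) ∂μ := by simp only [shiftedMean, add_zero]
    rwa [← hH0, ← ha 0 le_rfl, ← hb 0 le_rfl, mem_Icc, (hstrict 0 le_rfl).le_iff_le,
      (hstrict 0 le_rfl).le_iff_le] at h0
  obtain ⟨x, k, hk⟩ := exists_detSP (cadlagOn_const 0) hac hbc hab hab0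
  exact ⟨_, k, hk.meanSP hY.cadlag hstrict ha hb⟩

namespace CondH

variable {h : ℝ → ℝ → ℝ} {Mh Lh ch Ch : ℝ}

theorem stronglyMonotone (hH : CondH h Mh Lh ch Ch) {t : ℝ} (ht : 0 ≤ t) :
    StronglyMonotone ch (h t) := fun x y hxy => by
  have hle := hH.lip_lower t y x ht
  rwa [abs_of_nonneg (sub_nonneg.2 hxy),
    abs_of_nonneg (sub_nonneg.2 ((hH.strict_mono t ht).monotone hxy))] at hle

theorem lipschitzWith (hH : CondH h Mh Lh ch Ch) {t : ℝ} (ht : 0 ≤ t) :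
    LipschitzWith Ch.toNNReal (h t) :=
  .of_dist_le' fun x y => hH.lip_upper t x y ht

theorem cadlagOn (hH : CondH h Mh Lh ch Ch) (x : ℝ) : CadlagOn (h · x) :=
  cadlagOn_of_continuousOn <| LipschitzOnWith.continuousOn <|
    LipschitzOnWith.of_dist_le' fun t ht s hs => hH.lip_time s t x hs ht

end CondH

/-- existence of a solution of the Skorokhod problem with mean minimality
condition and two constraints associated with `(h, Y, l, u)`. -/
theorem stmt_4 {Ω : Type*} [MeasurableSpace Ω] (μ : Measure Ω) [IsProbabilityMeasure μ]
    (h : ℝ → ℝ → ℝ) (Mh Lh ch Ch : ℝ) (hH : CondH h Mh Lh ch Ch)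
    (Y : ℝ → Ω → ℝ) (hY : NiceProcess μ Y)
    (l u : ℝ → ℝ) (hl : CadlagOn l) (hu : CadlagOn u)
    (hlu : ∀ t : ℝ, 0 ≤ t → l t ≤ u t)
    (h0 : (∫ ω, h 0 (Y 0 ω) ∂μ) ∈ Set.Icc (l 0) (u 0)) :
    ∃ (X : ℝ → Ω → ℝ) (k : ℝ → ℝ), MeanSP μ h Y l u X k :=
  stmt_4_general hH.ch_pos (fun _ => hH.stronglyMonotone) (fun _ => hH.lipschitzWith) hH.cadlagOn hY
    hl hu hlu h0
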